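/- Let B ⊆ A be a set of actions of a CTS and q a state. If B is semi-←-stubborn at q (sst←_q(B), using left-commutativity as the ⋆-commutativity) and q →β q' for some action β ∉ B, then B is semi-←-stubborn at q' (sst←_{q'}(B)). -/

import Mathlib

/-!
The set `B` itself serves as the necessary enabling set at `q'`. Let `α ∈ B` be disabled at `q'`
and enabled at the end of a path from `q'`. If `α` is disabled at `q`, prefixing the path with `β`
and using the enabling set at `q` yields an action of `B` on the path, because `β ∉ B`. If `α` is
enabled at `q`, then D2 at `q` makes it left-commute with every action outside `B`; a path avoiding
`B` would let `α` be moved back to `q'` (`CTS.en_of_path_leftComm`), where it is disabled.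
For D2, `α ∈ B` enabled at `q'` was already enabled at `q`, since `β` alone would otherwise
have to meet an enabling set contained in `B`.
-/

namespace TRF

/-- Phases of a transaction: external (N), pre-phase (R), post-phase (L). -/
inductive Phase : Type
  | N | R | L
deriving DecidableEq

/-- A concurrent transition system (CTS) over states `X`, actions `A` and
processes `P`.  The partition `A = ⨄ A_i` is given by the map `proc`
assigning to each action the (unique) process it belongs to. -/
structure CTS (X A P : Type) where
  T : X → A → X → Prop
  proc : A → P
  q0 : X

variable {X A P : Type}

/-- Sequential composition of binary relations. -/
def RComp {S : Type _} (r s : S → S → Prop) : S → S → Prop :=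
  fun x z => ∃ y, r x y ∧ s y z

namespace CTS

/-- The relation `→α`. -/
def rel (S : CTS X A P) (α : A) : X → X → Prop := fun q q' => S.T q α q'

/-- The relation `→_i` (union of `→α` over `α ∈ A_i`). -/
def stepOf (S : CTS X A P) (i : P) : X → X → Prop :=
  fun q q' => ∃ α, S.proc α = i ∧ S.T q α q'

/-- The relation `→` (union of all `→α`). -/
def step (S : CTS X A P) : X → X → Prop := fun q q' => ∃ α, S.T q α q'

/-- The enabled actions at `q`. -/
def en (S : CTS X A P) (q : X) : Set A := {α | ∃ q', S.T q α q'}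

/-- Reachability from the initial state. -/
def Reach (S : CTS X A P) (q : X) : Prop := Relation.ReflTransGen S.step S.q0 q

/-- `α` right-commutes with `β`:  `→α ∘ →β ⊆ →β ∘ →α`. -/
def RightComm (S : CTS X A P) (α β : A) : Prop :=
  ∀ x z, RComp (S.rel α) (S.rel β) x z → RComp (S.rel β) (S.rel α) x z

/-- `α` left-commutes with `β`:  `→α ∘ →β ⊇ →β ∘ →α`. -/
def LeftComm (S : CTS X A P) (α β : A) : Prop :=
  ∀ x z, RComp (S.rel β) (S.rel α) x z → RComp (S.rel α) (S.rel β) x z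

/-- `α` and `β` strongly commute:  `c ◁ (→α ∘ →β) = c ◁ (→β ∘ →α)` where
`c` is the set of states where both are enabled. -/
def StrongComm (S : CTS X A P) (α β : A) : Prop :=
  ∀ x z, α ∈ S.en x → β ∈ S.en x →
    (RComp (S.rel α) (S.rel β) x z ↔ RComp (S.rel β) (S.rel α) x z)

/-- Finite paths, labelled by a list of actions. -/
def Path (S : CTS X A P) : X → List A → X → Prop
  | q, [], q'' => q = q''
  | q, a :: as, q'' => ∃ q', S.T q a q' ∧ S.Path q' as q''

/-- `E` is a necessary enabling set (NES) for `α` at `q1`. -/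
def IsNES (S : CTS X A P) (α : A) (q1 : X) (E : Set A) : Prop :=
  ∀ (as : List A) (qn : X), S.Path q1 as qn → α ∉ S.en q1 → α ∈ S.en qn →
    ∃ β ∈ E, β ∈ as

end CTS

/-- The three commutativity modes ←, →, ↔. -/
inductive StarMode : Type
  | left | right | strong

/-- ⋆-commutativity. -/
def CTS.StarComm (S : CTS X A P) : StarMode → A → A → Prop
  | .left => S.LeftComm
  | .right => S.RightComm
  | .strong => S.StrongComm

/-- `B` is semi-⋆-stubborn at `q` (conditions D1 and D2). -/
def CTS.SemiStubborn (S : CTS X A P) (st : StarMode) (q : X) (B : Set A) : Prop :=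
  (∀ α ∈ B, α ∉ S.en q → ∃ E, S.IsNES α q E ∧ E ⊆ B) ∧
  (∀ α ∈ B, α ∈ S.en q → ∀ β, ¬ S.StarComm st α β → β ∈ B)

/-- `B` is ⋆-stubborn at `q` (additionally condition D0). -/
def CTS.Stubborn (S : CTS X A P) (st : StarMode) (q : X) (B : Set A) : Prop :=
  S.SemiStubborn st q B ∧ ((S.en q).Nonempty → (B ∩ S.en q).Nonempty)

/-- Process `i` is dynamically left-moving at `q`. -/
def CTS.lmv (S : CTS X A P) (i : P) (q : X) : Prop :=
  ∃ B : Set A, S.SemiStubborn .left q B ∧ B ∩ S.en q = {a | S.proc a = i} ∩ S.en q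

/-- The transition `(q,α,q')` of process `i` is dynamically right-moving. -/
def CTS.rmv (S : CTS X A P) (i : P) (q : X) (α : A) (q' : X) : Prop :=
  ∃ B : Set A, S.SemiStubborn .right q B ∧ α ∈ B ∧
    B ∩ S.en q' ⊆ {a | S.proc a = i} ∧ B ∩ S.en q = {α}

/-- The set `A⊖` of actions that can disable `Y`. -/
def Aminus (S : CTS X A P) (Y : Set X) : Set A :=
  {α | ∃ q ∈ Y, ∃ q', q' ∉ Y ∧ S.T q α q'}

/-- The set `A⊕` of actions that can enable `Y`. -/
def Aplus (S : CTS X A P) (Y : Set X) : Set A :=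
  {α | ∃ q, q ∉ Y ∧ ∃ q' ∈ Y, S.T q α q'}

/-- Phase vectors `H = {N,R,L}^P`. -/
abbrev HVec (P : Type) := P → Phase

/-- The initial phase vector (all external). -/
def h0 (P : Type) : HVec P := fun _ => Phase.N

/-- The transition relation `T'_i` of the transaction system. -/
def TStep (S : CTS X A P) (Y : Set X) (i : P) :
    X × HVec P → A → X × HVec P → Prop :=
  fun s α s' =>
    S.T s.1 α s'.1 ∧ S.proc α = i ∧ (∀ j, j ≠ i → s'.2 j = s.2 j) ∧
    (s'.2 i = Phase.R ↔ (s.2 i ≠ Phase.L ∧ S.rmv i s.1 α s'.1 ∧ α ∉ Aminus S Y)) ∧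
    (s'.2 i = Phase.L → (S.lmv i s'.1 ∧ S.en s'.1 ∩ {a | S.proc a = i} ∩ Aplus S Y = ∅))

/-- The transaction system CTS' of a CTS. -/
def TSys (S : CTS X A P) (Y : Set X) : CTS (X × HVec P) A P where
  T := fun s α s' => TStep S Y (S.proc α) s α s'
  proc := S.proc
  q0 := (S.q0, h0 P)

/-- States whose `i`-phase is external. -/
def Npart (i : P) : Set (X × HVec P) := {s | s.2 i = Phase.N}

/-- States whose `i`-phase is the pre-phase. -/
def Rpart (i : P) : Set (X × HVec P) := {s | s.2 i = Phase.R}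

/-- States whose `i`-phase is the post-phase. -/
def Lpart (i : P) : Set (X × HVec P) := {s | s.2 i = Phase.L}

/-- Generic `↪_i = (⋂_{j≠i} N_j) ◁ →_i`. -/
def hookG {S : Type _} (stepOf : P → S → S → Prop) (Np : P → Set S) (i : P) : S → S → Prop :=
  fun q q' => (∀ j, j ≠ i → q ∈ Np j) ∧ stepOf i q q'

/-- Generic `⇒_i = N_i ◁ ((↪_i ▷ co-N_i)^* ∘ (↪_i ▷ N_i))`. -/
def rstepG {S : Type _} (stepOf : P → S → S → Prop) (Np : P → Set S) (i : P) : S → S → Prop :=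
  fun q q'' => q ∈ Np i ∧
    RComp (Relation.ReflTransGen (fun a b => hookG stepOf Np i a b ∧ b ∉ Np i))
          (fun a b => hookG stepOf Np i a b ∧ b ∈ Np i) q q''

/-- `↪_i` for the transaction system. -/
def hook (S : CTS X A P) (Y : Set X) (i : P) : X × HVec P → X × HVec P → Prop :=
  hookG (TSys S Y).stepOf (fun j => Npart j) i

/-- `⇒_i` for the transaction system. -/
def rstep (S : CTS X A P) (Y : Set X) (i : P) : X × HVec P → X × HVec P → Prop :=
  rstepG (TSys S Y).stepOf (fun j => Npart j) i

/-- Reachability in the reduced transaction system (RTS). -/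
def ReachRTS (S : CTS X A P) (Y : Set X) (s : X × HVec P) : Prop :=
  Relation.ReflTransGen (fun a b => ∃ i, rstep S Y i a b) (S.q0, h0 P) s

/-- Thread bisimulation: an equivalence relation that transfers `→_i`-steps. -/
def CTS.ThreadBisim (S : CTS X A P) (R : X → X → Prop) : Prop :=
  Equivalence R ∧
  ∀ (i : P) (q q' q1 : X), R q q' → S.stepOf i q q1 → ∃ q1', S.stepOf i q' q1' ∧ R q1 q1'

/-- The phase-forgetting relation `≅_i` on transaction-system states. -/
def phEq (i : P) : (X × HVec P) → (X × HVec P) → Prop :=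
  fun s s' => s.1 = s'.1 ∧ ∀ j, j ≠ i → s.2 j = s'.2 j

/-- `≅_Z`: transitive closure of the union of the `≅_i` for `i ∈ Z`. -/
def phEqZ (Z : Set P) : (X × HVec P) → (X × HVec P) → Prop :=
  Relation.TransGen (fun a b => ∃ k ∈ Z, phEq k a b)

/-- Right restriction `r ▷ W`. -/
def restR {S : Type _} (r : S → S → Prop) (W : Set S) : S → S → Prop :=
  fun x y => r x y ∧ y ∈ W

/-- Left restriction `W ◁ r`. -/
def restL {S : Type _} (W : Set S) (r : S → S → Prop) : S → S → Prop :=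
  fun x y => x ∈ W ∧ r x y

/-- `r` right-commutes with `s` up to `e`:  `r ∘ s ∘ e ⊆ s ∘ r ∘ e`. -/
def RightCommUpTo {S : Type _} (r s e : S → S → Prop) : Prop :=
  ∀ x z, RComp r (RComp s e) x z → RComp s (RComp r e) x z

/-- `r` left-commutes with `s` up to `e`:  `r ∘ s ∘ e ⊇ s ∘ r ∘ e`. -/
def LeftCommUpTo {S : Type _} (r s e : S → S → Prop) : Prop :=
  ∀ x z, RComp s (RComp r e) x z → RComp r (RComp s e) x z

/-- Enabledness travels backwards along a path all of whose actions `α` left-commutes with. -/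
theorem CTS.en_of_path_leftComm (S : CTS X A P) (α : A) (as : List A) (q q' : X)
    (hpath : S.Path q as q') (hcomm : ∀ γ ∈ as, S.LeftComm α γ) (hen : α ∈ S.en q') :
    α ∈ S.en q := by
  induction as generalizing q with
  | nil =>
    have h : q = q' := hpath
    exact h ▸ hen
  | cons a as ih =>
    obtain ⟨q₁, hstep, hrest⟩ := hpath
    obtain ⟨z, hz⟩ := ih q₁ hrest fun γ hγ => hcomm γ (List.mem_cons_of_mem _ hγ)
    obtain ⟨y, hy, _⟩ := hcomm a List.mem_cons_self q z ⟨q₁, hstep, hz⟩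
    exact ⟨y, hy⟩

/-- a semi-←-stubborn set stays semi-←-stubborn after firing an
action outside of it. -/
theorem semiStubborn_left_invariant {X A P : Type} [Finite A] [Finite P]
    (S : CTS X A P) (B : Set A) (q q' : X) (β : A)
    (hst : S.SemiStubborn StarMode.left q B) (hβ : β ∉ B) (hstep : S.T q β q') :
    S.SemiStubborn StarMode.left q' B := by
  obtain ⟨hD1, hD2⟩ := hst
  refine ⟨fun α hα _ => ⟨B, fun as qn hpath hdis hen => ?_, subset_rfl⟩, fun α hα hen => ?_⟩
  · by_cases hq : α ∈ S.en q
    · by_contra! hno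
      refine hdis (S.en_of_path_leftComm α as q' qn hpath (fun γ hγ => ?_) hen)
      by_contra hnc
      exact hno γ (hD2 α hα hq γ hnc) hγ
    · obtain ⟨E, hE, hEB⟩ := hD1 α hα hq
      obtain ⟨γ, hγE, hγ⟩ := hE (β :: as) qn ⟨q', hstep, hpath⟩ hq hen
      rcases List.mem_cons.mp hγ with rfl | hγ
      · exact absurd (hEB hγE) hβ
      · exact ⟨γ, hEB hγE, hγ⟩
  · refine hD2 α hα ?_
    by_contra hq
    obtain ⟨E, hE, hEB⟩ := hD1 α hα hq
    obtain ⟨γ, hγE, hγ⟩ := hE [β] q' ⟨q', hstep, rfl⟩ hq hen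
    exact hβ (List.mem_singleton.mp hγ ▸ hEB hγE)

end TRF
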